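/- arXiv:2108.02990 — 6 statements merged into one kernel-verified Lean document; each statement's English description precedes it below -/
import Mathlib

section
/- Let γ̄ > 0, m > 0, K ≥ 0, 0 ≤ Δ ≤ 1 and x ≥ 0. Then ∫₀^x f_FTR(t; γ̄, m, K, Δ) dt = (1/π) ∫₀^π ((1+K)x/γ̄) · (m/(m + K(1+Δcos θ)))^m · Φ₂(1−m, m; 2; −(1+K)x/γ̄, −(1+K)m x/(γ̄(m + K(1+Δcos θ)))) dθ, i.e., the cumulative distribution function of the FTR model is given by a finite-range integral of bivariate confluent hypergeometric functions. -/
/-! The substitution `lam = (1 + K) / g`, `q = m / (m + K (1 + Δ cos θ))` turns the inner integrand of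
the density into `q ^ m * lam * exp (-lam t) * ₁F₁(m; 1; lam (1 - q) t)`. After exchanging the two
integrals (the integrand is jointly continuous), the claim is, for each `θ`,
`∫₀ˣ exp (-lam t) ₁F₁(m; 1; lam (1 - q) t) dt = x Φ₂(1 - m, m; 2; -lam x, -lam q x)`
(`integral_exp_mul_hyp1F1`). The Cauchy product of the two series on the left is a power series in
`t`, which is integrated term by term. Its coefficients agree with those of `Φ₂`, summed along
antidiagonals, by the finite identity `sum_diff_identity`: with `E` the shift on sequences, it is the
binomial expansion of `((1 - q) E - 1) ^ n = ((E - 1) - q E) ^ n` applied to `(m)_l / l!`, whose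
iterated differences `diffTerm` have a closed form by the Chu–Vandermonde identity. -/

open MeasureTheory Real

/-- Pochhammer symbol (ascending factorial) `(a)_k`. -/
noncomputable def poch (a : ℝ) (k : ℕ) : ℝ := ∏ i ∈ Finset.range k, (a + i)

/-- Confluent hypergeometric function `₁F₁(a; 1; z)`. -/
noncomputable def hyp1F1 (a z : ℝ) : ℝ := ∑' k : ℕ, poch a k * z ^ k / ((Nat.factorial k : ℝ)) ^ 2

/-- The FTR density `f_FTR(x; γ̄, m, K, Δ)`. -/
noncomputable def fFTR (g m K Δ x : ℝ) : ℝ :=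
  (1 / π) * ∫ θ in (0 : ℝ)..π,
    (m / (m + K * (1 + Δ * Real.cos θ))) ^ m * ((1 + K) / g) * Real.exp (-(1 + K) * x / g) *
      hyp1F1 m (K * (1 + K) * (1 + Δ * Real.cos θ) * x / (g * (m + K * (1 + Δ * Real.cos θ))))

/-- Bivariate confluent hypergeometric function `Φ₂(b₁, b₂; c; x, y)`. -/
noncomputable def Phi2 (b₁ b₂ c x y : ℝ) : ℝ :=
  ∑' p : ℕ × ℕ, poch b₁ p.1 * poch b₂ p.2 * x ^ p.1 * y ^ p.2 /
    (poch c (p.1 + p.2) * (Nat.factorial p.1 : ℝ) * (Nat.factorial p.2 : ℝ))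

lemma poch_succ (a : ℝ) (k : ℕ) : poch a (k + 1) = poch a k * (a + k) := by
  simp [poch, Finset.prod_range_succ]

lemma poch_two (n : ℕ) : poch 2 n = ((n + 1).factorial : ℝ) := by
  induction n with
  | zero => simp [poch]
  | succ n ih =>
    rw [poch_succ, ih, Nat.factorial_succ (n + 1)]
    push_cast
    ring

lemma abs_poch_le (a : ℝ) (k : ℕ) : |poch a k| ≤ (|a| + 1) ^ k * (k.factorial : ℝ) := by
  induction k with
  | zero => simp [poch]
  | succ k ih =>
    rw [poch_succ, abs_mul, pow_succ, Nat.factorial_succ]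
    have h : |a + k| ≤ (|a| + 1) * (k + 1) := by
      have := abs_add_le a (k : ℝ)
      rw [Nat.abs_cast] at this
      nlinarith [abs_nonneg a, Nat.cast_nonneg (α := ℝ) k]
    calc |poch a k| * |a + k|
        ≤ ((|a| + 1) ^ k * (k.factorial : ℝ)) * ((|a| + 1) * (k + 1)) := by gcongr
      _ = _ := by push_cast; ring

/-- Closed form of the `j`-th forward difference at `l` of the sequence `l ↦ (m)_l / l!`. -/
noncomputable def diffTerm (m : ℝ) (j l : ℕ) : ℝ :=
  (-1) ^ j * poch m l * poch (1 - m) j / ((l + j).factorial : ℝ)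

lemma diffTerm_succ (m : ℝ) (j l : ℕ) :
    diffTerm m (j + 1) l = diffTerm m j (l + 1) - diffTerm m j l := by
  unfold diffTerm
  have h1 : l + 1 + j = l + j + 1 := by ring
  rw [h1, ← add_assoc, poch_succ, poch_succ, Nat.factorial_succ]
  have : ((l + j).factorial : ℝ) ≠ 0 := by positivity
  have : ((l : ℝ) + j + 1) ≠ 0 := by positivity
  push_cast
  field_simp
  ring

/-- The expansions of `((1 - q) E - 1) ^ n` and `((E - 1) - q E) ^ n`, for `E` the shift operator,
agree on the sequence `diffTerm m 0`. -/
lemma sum_diff_identity (m q : ℝ) (n : ℕ) : ∀ l : ℕ,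
    ∑ p ∈ Finset.HasAntidiagonal.antidiagonal n,
        (n.choose p.1 : ℝ) * ((-1) ^ p.1 * (1 - q) ^ p.2 * diffTerm m 0 (l + p.2)) =
      ∑ p ∈ Finset.HasAntidiagonal.antidiagonal n,
        (n.choose p.1 : ℝ) * ((-q) ^ p.2 * diffTerm m p.1 (l + p.2)) := by
  induction n with
  | zero => intro l; simp
  | succ n ih =>
    intro l
    rw [Finset.sum_antidiagonal_choose_succ_mul
        (fun i k => (-1) ^ i * (1 - q) ^ k * diffTerm m 0 (l + k)) n,
      Finset.sum_antidiagonal_choose_succ_mul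
        (fun i k => (-q) ^ k * diffTerm m i (l + k)) n]
    have hsymm : ∀ f : ℕ → ℕ → ℝ,
        ∑ p ∈ Finset.HasAntidiagonal.antidiagonal n, (n.choose p.2 : ℝ) * f p.1 p.2 =
          ∑ p ∈ Finset.HasAntidiagonal.antidiagonal n, (n.choose p.1 : ℝ) * f p.1 p.2 := by
      intro f
      refine Finset.sum_congr rfl fun p hp => ?_
      rw [Nat.choose_symm_of_eq_add (Finset.HasAntidiagonal.mem_antidiagonal.mp hp).symm]
    rw [hsymm (fun i k => (-1) ^ (i + 1) * (1 - q) ^ k * diffTerm m 0 (l + k)),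
      hsymm (fun i k => (-q) ^ k * diffTerm m (i + 1) (l + k))]
    have e1 := ih l
    have e2 := ih (l + 1)
    have L : ∀ k, l + 1 + k = l + (k + 1) := fun k => by ring
    simp only [L] at e2
    have hl : ∑ p ∈ Finset.HasAntidiagonal.antidiagonal n,
          (n.choose p.1 : ℝ) * ((-1) ^ p.1 * (1 - q) ^ (p.2 + 1) * diffTerm m 0 (l + (p.2 + 1))) +
        ∑ p ∈ Finset.HasAntidiagonal.antidiagonal n,
          (n.choose p.1 : ℝ) * ((-1) ^ (p.1 + 1) * (1 - q) ^ p.2 * diffTerm m 0 (l + p.2)) =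
        (1 - q) * ∑ p ∈ Finset.HasAntidiagonal.antidiagonal n,
          (n.choose p.1 : ℝ) * ((-1) ^ p.1 * (1 - q) ^ p.2 * diffTerm m 0 (l + (p.2 + 1))) -
        ∑ p ∈ Finset.HasAntidiagonal.antidiagonal n,
          (n.choose p.1 : ℝ) * ((-1) ^ p.1 * (1 - q) ^ p.2 * diffTerm m 0 (l + p.2)) := by
      rw [Finset.mul_sum, ← Finset.sum_add_distrib, ← Finset.sum_sub_distrib]
      exact Finset.sum_congr rfl fun p _ => by ring
    rw [hl, e1, e2, Finset.mul_sum, ← Finset.sum_add_distrib, ← Finset.sum_sub_distrib]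
    refine Finset.sum_congr rfl fun p _ => ?_
    rw [diffTerm_succ, add_assoc l p.2 1]
    ring

/-- The sum over `j + k = n` of `(1 - m)_j (m)_k q ^ k / (j! k!)`; divided by `(c)_n` it is the
total-degree-`n` part of `Φ₂(1 - m, m; c; 1, q)`. -/
noncomputable def antidiagCoeff (m q : ℝ) (n : ℕ) : ℝ :=
  ∑ p ∈ Finset.HasAntidiagonal.antidiagonal n,
    poch (1 - m) p.1 * poch m p.2 * q ^ p.2 / ((p.1.factorial : ℝ) * (p.2.factorial : ℝ))

lemma choose_cast_of_mem {n : ℕ} {p : ℕ × ℕ} (hp : p ∈ Finset.HasAntidiagonal.antidiagonal n) :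
    (n.choose p.1 : ℝ) = n.factorial / ((p.1.factorial : ℝ) * (p.2.factorial : ℝ)) := by
  obtain rfl := Finset.HasAntidiagonal.mem_antidiagonal.mp hp
  exact Nat.cast_add_choose ℝ

/-- The `n`-th term of the Cauchy product of `exp (-lam t)` and `₁F₁(m; 1; lam (1 - q) t)`. -/
lemma cauchy_coeff (m q lam t : ℝ) (n : ℕ) :
    ∑ p ∈ Finset.HasAntidiagonal.antidiagonal n, ((-lam * t) ^ p.1 / (p.1.factorial : ℝ)) *
        (poch m p.2 * (lam * (1 - q) * t) ^ p.2 / (p.2.factorial : ℝ) ^ 2) =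
      (-lam) ^ n * antidiagCoeff m q n / (n.factorial : ℝ) * t ^ n := by
  have h := sum_diff_identity m q n 0
  have hn : (n.factorial : ℝ) ≠ 0 := by positivity
  have h1 : ∑ p ∈ Finset.HasAntidiagonal.antidiagonal n, ((-lam * t) ^ p.1 / (p.1.factorial : ℝ)) *
        (poch m p.2 * (lam * (1 - q) * t) ^ p.2 / (p.2.factorial : ℝ) ^ 2) =
      (lam * t) ^ n / (n.factorial : ℝ) * ∑ p ∈ Finset.HasAntidiagonal.antidiagonal n,
        (n.choose p.1 : ℝ) * ((-1) ^ p.1 * (1 - q) ^ p.2 * diffTerm m 0 (0 + p.2)) := by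
    rw [Finset.mul_sum]
    refine Finset.sum_congr rfl fun p hp => ?_
    rw [choose_cast_of_mem hp]
    have hp' := Finset.HasAntidiagonal.mem_antidiagonal.mp hp
    have hp1 : (p.1.factorial : ℝ) ≠ 0 := by positivity
    have hp2 : (p.2.factorial : ℝ) ≠ 0 := by positivity
    have e : (lam * t) ^ n = (lam * t) ^ p.1 * (lam * t) ^ p.2 := by rw [← hp', pow_add]
    have e1 : (-lam * t) ^ p.1 = (-1) ^ p.1 * (lam * t) ^ p.1 := by rw [← mul_pow]; ring
    have e2 : (lam * (1 - q) * t) ^ p.2 = (1 - q) ^ p.2 * (lam * t) ^ p.2 := by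
      rw [← mul_pow]; ring
    rw [e, e1, e2]
    simp only [diffTerm, zero_add, add_zero, pow_zero, one_mul]
    have : poch (1 - m) 0 = 1 := by simp [poch]
    rw [this]
    field_simp
  rw [h1, h, antidiagCoeff, Finset.mul_sum, Finset.mul_sum, Finset.sum_div, Finset.sum_mul]
  refine Finset.sum_congr rfl fun p hp => ?_
  rw [choose_cast_of_mem hp]
  have hp' := Finset.HasAntidiagonal.mem_antidiagonal.mp hp
  have hp1 : (p.1.factorial : ℝ) ≠ 0 := by positivity
  have hp2 : (p.2.factorial : ℝ) ≠ 0 := by positivity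
  have e : (-lam) ^ n = lam ^ n * (-1) ^ p.1 * (-1) ^ p.2 := by
    rw [neg_pow, ← hp', pow_add, pow_add]; ring
  rw [diffTerm, zero_add, add_comm p.2 p.1, hp', e, neg_pow q, mul_pow]
  field_simp

lemma hyp1F1_term_bound (a z : ℝ) (k : ℕ) :
    ‖poch a k * z ^ k / (k.factorial : ℝ) ^ 2‖ ≤ ((|a| + 1) * |z|) ^ k / (k.factorial : ℝ) := by
  have hk : (0 : ℝ) < k.factorial := by positivity
  rw [norm_div, norm_mul, norm_pow, norm_pow, Real.norm_natCast, Real.norm_eq_abs,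
    Real.norm_eq_abs, div_le_div_iff₀ (by positivity) hk, mul_pow]
  calc |poch a k| * |z| ^ k * (k.factorial : ℝ)
      ≤ ((|a| + 1) ^ k * (k.factorial : ℝ)) * |z| ^ k * (k.factorial : ℝ) := by
        gcongr; exact abs_poch_le a k
    _ = _ := by ring

/-- The series converges uniformly on every bounded interval. -/
lemma continuous_hyp1F1 (a : ℝ) : Continuous (hyp1F1 a) := by
  rw [continuous_iff_continuousAt]
  intro z
  have h : ContinuousOn (hyp1F1 a) (Metric.ball 0 (|z| + 1)) := by
    refine continuousOn_tsum (f := fun (k : ℕ) (y : ℝ) => poch a k * y ^ k / (k.factorial : ℝ) ^ 2)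
      (u := fun k => ((|a| + 1) * (|z| + 1)) ^ k / (k.factorial : ℝ))
      (fun k => Continuous.continuousOn (by fun_prop)) (Real.summable_pow_div_factorial _) ?_
    intro k y hy
    have hy' : |y| ≤ |z| + 1 := by
      have := mem_ball_zero_iff.mp hy
      rw [Real.norm_eq_abs] at this
      exact this.le
    refine (hyp1F1_term_bound a y k).trans ?_
    gcongr
  exact h.continuousAt (Metric.isOpen_ball.mem_nhds (by simp))

/-- Since `(2)_{j+k} = (j + k + 1)! ≥ j! k!`, the double series is dominated by a product of two
exponential series. -/
lemma Phi2_summable (b₁ b₂ x y : ℝ) :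
    Summable fun p : ℕ × ℕ => poch b₁ p.1 * poch b₂ p.2 * x ^ p.1 * y ^ p.2 /
      (poch 2 (p.1 + p.2) * (Nat.factorial p.1 : ℝ) * (Nat.factorial p.2 : ℝ)) := by
  have hs := (Real.summable_pow_div_factorial ((|b₁| + 1) * |x|)).mul_of_nonneg
    (Real.summable_pow_div_factorial ((|b₂| + 1) * |y|))
    (fun k => by positivity) (fun k => by positivity)
  refine Summable.of_norm_bounded hs ?_
  rintro ⟨j, k⟩
  have hj : (0 : ℝ) < j.factorial := by positivity
  have hk : (0 : ℝ) < k.factorial := by positivity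
  have hn : (0 : ℝ) < (j + k + 1).factorial := by positivity
  have hle : (j.factorial : ℝ) * k.factorial ≤ (j + k + 1).factorial := by
    exact_mod_cast (Nat.le_of_dvd (Nat.factorial_pos _)
      (Nat.factorial_mul_factorial_dvd_factorial_add j k)).trans
      (Nat.factorial_le (Nat.le_succ _))
  simp only [poch_two, Real.norm_eq_abs]
  rw [abs_div, abs_mul, abs_mul, abs_mul, abs_mul, abs_mul, abs_pow, abs_pow, Nat.abs_cast,
    Nat.abs_cast, Nat.abs_cast, div_mul_div_comm]
  calc |poch b₁ j| * |poch b₂ k| * |x| ^ j * |y| ^ k /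
        ((j + k + 1).factorial * j.factorial * k.factorial)
      ≤ (((|b₁| + 1) ^ j * j.factorial) * ((|b₂| + 1) ^ k * k.factorial) * |x| ^ j * |y| ^ k) /
        ((j.factorial * k.factorial) * j.factorial * k.factorial) := by
        gcongr
        · exact abs_poch_le _ _
        · exact abs_poch_le _ _
    _ = _ := by rw [mul_pow, mul_pow]; field_simp

/-- `Φ₂(1 - m, m; 2; -lam x, -lam q x)` as a power series in `x`. -/
lemma Phi2_eq_tsum (m q lam x : ℝ) :
    Phi2 (1 - m) m 2 (-lam * x) (-lam * q * x) =
      ∑' n : ℕ, (-lam) ^ n * antidiagCoeff m q n / (n.factorial : ℝ) * x ^ n / (n + 1) := by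
  have hs := Phi2_summable (1 - m) m (-lam * x) (-lam * q * x)
  rw [Phi2, ← Finset.HasAntidiagonal.sigmaAntidiagonalEquivProd.tsum_eq]
  have hs' := Finset.HasAntidiagonal.sigmaAntidiagonalEquivProd.summable_iff.mpr hs
  simp only [Function.comp_def] at hs'
  rw [Summable.tsum_sigma' (fun n => (hasSum_fintype _).summable) hs']
  refine tsum_congr fun n => ?_
  rw [tsum_fintype]
  simp only [Finset.HasAntidiagonal.sigmaAntidiagonalEquivProd_apply]
  rw [Finset.sum_coe_sort (Finset.HasAntidiagonal.antidiagonal n) (fun p : ℕ × ℕ =>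
    poch (1 - m) p.1 * poch m p.2 * (-lam * x) ^ p.1 * (-lam * q * x) ^ p.2 /
      (poch 2 (p.1 + p.2) * (Nat.factorial p.1 : ℝ) * (Nat.factorial p.2 : ℝ)))]
  rw [antidiagCoeff, Finset.mul_sum, Finset.sum_div, Finset.sum_mul, Finset.sum_div]
  refine Finset.sum_congr rfl fun p hp => ?_
  have hp' := Finset.HasAntidiagonal.mem_antidiagonal.mp hp
  rw [hp', poch_two, Nat.factorial_succ]
  have e : (-lam) ^ n = (-lam) ^ p.1 * (-lam) ^ p.2 := by rw [← pow_add, hp']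
  have e' : x ^ n = x ^ p.1 * x ^ p.2 := by rw [← pow_add, hp']
  have : (n : ℝ) + 1 ≠ 0 := by positivity
  rw [e, e', mul_pow, mul_pow, mul_pow]
  push_cast
  field_simp

/-- Termwise integration of the Cauchy product; `∫₀ˣ tⁿ dt = x ^ (n + 1) / (n + 1)` is what raises the
third parameter of `Φ₂` from `1` to `2`. -/
lemma integral_exp_mul_hyp1F1 (m q lam x : ℝ) :
    ∫ t in (0 : ℝ)..x, Real.exp (-lam * t) * hyp1F1 m (lam * (1 - q) * t) =
      x * Phi2 (1 - m) m 2 (-lam * x) (-lam * q * x) := by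
  set c : ℕ → ℝ := fun n => (-lam) ^ n * antidiagCoeff m q n / (n.factorial : ℝ) with hc
  have hE : ∀ t : ℝ, Summable fun k : ℕ => ‖(-lam * t) ^ k / (k.factorial : ℝ)‖ := fun t =>
    (Real.summable_pow_div_factorial _).norm
  have hF : ∀ t : ℝ, Summable fun k : ℕ =>
      ‖poch m k * (lam * (1 - q) * t) ^ k / (k.factorial : ℝ) ^ 2‖ := fun t =>
    Summable.of_nonneg_of_le (fun k => norm_nonneg _) (hyp1F1_term_bound m _)
      (Real.summable_pow_div_factorial _)
  have hsum : ∀ t : ℝ, Summable fun n => ‖c n * t ^ n‖ := by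
    intro t
    have := summable_norm_sum_mul_antidiagonal_of_summable_norm (hE t) (hF t)
    simpa only [cauchy_coeff] using this
  have hval : ∀ t : ℝ, Real.exp (-lam * t) * hyp1F1 m (lam * (1 - q) * t) = ∑' n, c n * t ^ n := by
    intro t
    rw [Real.exp_eq_exp_ℝ, NormedSpace.exp_eq_tsum_div, hyp1F1,
      tsum_mul_tsum_eq_tsum_sum_antidiagonal_of_summable_norm (hE t) (hF t)]
    simp only [cauchy_coeff, hc]
  have key : HasSum (fun n => ∫ t in (0 : ℝ)..x, c n * t ^ n)
      (∫ t in (0 : ℝ)..x, Real.exp (-lam * t) * hyp1F1 m (lam * (1 - q) * t)) := by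
    refine intervalIntegral.hasSum_integral_of_dominated_convergence (fun n _ => ‖c n * x ^ n‖)
      (fun n => by
        have : Continuous fun t : ℝ => c n * t ^ n := by fun_prop
        exact this.aestronglyMeasurable) ?_ ?_ ?_ ?_
    · intro n
      refine Filter.Eventually.of_forall fun t ht => ?_
      rw [norm_mul, norm_mul, norm_pow, norm_pow]
      have : ‖t‖ ≤ ‖x‖ := by
        rw [Real.norm_eq_abs, Real.norm_eq_abs]
        have := Set.abs_sub_left_of_mem_uIcc (Set.uIoc_subset_uIcc ht)
        simpa using this
      gcongr
    · exact Filter.Eventually.of_forall fun t _ => hsum x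
    · exact intervalIntegrable_const
    · refine Filter.Eventually.of_forall fun t _ => ?_
      rw [hval t]
      exact (hsum t).of_norm.hasSum
  rw [← key.tsum_eq, Phi2_eq_tsum, ← tsum_mul_left]
  refine tsum_congr fun n => ?_
  rw [intervalIntegral.integral_const_mul, integral_pow]
  simp only [hc]
  ring

theorem stmt1 (g m K Δ x : ℝ) (hg : 0 < g) (hm : 0 < m) (hK : 0 ≤ K)
    (hΔ0 : 0 ≤ Δ) (hΔ1 : Δ ≤ 1) (hx : 0 ≤ x) :
    ∫ t in (0 : ℝ)..x, fFTR g m K Δ t =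
      (1 / π) * ∫ θ in (0 : ℝ)..π,
        ((1 + K) * x / g) * (m / (m + K * (1 + Δ * Real.cos θ))) ^ m *
          Phi2 (1 - m) m 2 (-(1 + K) * x / g)
            (-((1 + K) * m * x) / (g * (m + K * (1 + Δ * Real.cos θ)))) := by
  have hM : ∀ θ : ℝ, 0 < m + K * (1 + Δ * Real.cos θ) := by
    intro θ
    have h1 : 0 ≤ 1 + Δ * Real.cos θ := by nlinarith [Real.neg_one_le_cos θ]
    have := mul_nonneg hK h1
    linarith
  have hcont : Continuous fun p : ℝ × ℝ =>
      (m / (m + K * (1 + Δ * Real.cos p.2))) ^ m * ((1 + K) / g) * Real.exp (-(1 + K) * p.1 / g) *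
      hyp1F1 m (K * (1 + K) * (1 + Δ * Real.cos p.2) * p.1 /
        (g * (m + K * (1 + Δ * Real.cos p.2)))) := by
    have c1 : Continuous fun p : ℝ × ℝ => m / (m + K * (1 + Δ * Real.cos p.2)) :=
      continuous_const.div (by fun_prop) fun p => (hM p.2).ne'
    have c2 : Continuous fun p : ℝ × ℝ => K * (1 + K) * (1 + Δ * Real.cos p.2) * p.1 /
        (g * (m + K * (1 + Δ * Real.cos p.2))) :=
      Continuous.div (by fun_prop) (by fun_prop) fun p => (mul_pos hg (hM p.2)).ne'
    have c3 := (continuous_hyp1F1 m).comp c2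
    have c4 : Continuous fun p : ℝ × ℝ => (m / (m + K * (1 + Δ * Real.cos p.2))) ^ m :=
      c1.rpow_const fun p => Or.inr hm.le
    exact ((c4.mul continuous_const).mul (by fun_prop)).mul c3
  simp only [fFTR]
  rw [intervalIntegral.integral_const_mul]
  congr 1
  rw [intervalIntegral_intervalIntegral_swap]
  · refine intervalIntegral.integral_congr fun θ _ => ?_
    have hMθ := (hM θ).ne'
    have hI := integral_exp_mul_hyp1F1 m (m / (m + K * (1 + Δ * Real.cos θ))) ((1 + K) / g) x
    -- `K (1 + Δ cos θ) / (m + K (1 + Δ cos θ)) = 1 - q` puts the integrand in the form of `hI`.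
    have a1 : ∀ t : ℝ, (m / (m + K * (1 + Δ * Real.cos θ))) ^ m * ((1 + K) / g) *
        Real.exp (-(1 + K) * t / g) * hyp1F1 m (K * (1 + K) * (1 + Δ * Real.cos θ) * t /
          (g * (m + K * (1 + Δ * Real.cos θ)))) =
        (m / (m + K * (1 + Δ * Real.cos θ))) ^ m * ((1 + K) / g) *
          (Real.exp (-((1 + K) / g) * t) *
          hyp1F1 m ((1 + K) / g * (1 - m / (m + K * (1 + Δ * Real.cos θ))) * t)) := by
      intro t
      have b1 : -(1 + K) * t / g = -((1 + K) / g) * t := by ring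
      have b2 : K * (1 + K) * (1 + Δ * Real.cos θ) * t / (g * (m + K * (1 + Δ * Real.cos θ))) =
          (1 + K) / g * (1 - m / (m + K * (1 + Δ * Real.cos θ))) * t := by
        field_simp
        ring
      rw [b1, b2, mul_assoc ((m / (m + K * (1 + Δ * Real.cos θ))) ^ m * ((1 + K) / g))]
    have a2 : -(1 + K) * x / g = -((1 + K) / g) * x := by ring
    have a3 : -((1 + K) * m * x) / (g * (m + K * (1 + Δ * Real.cos θ))) =
        -((1 + K) / g) * (m / (m + K * (1 + Δ * Real.cos θ))) * x := by
      field_simp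
    simp only [a1]
    rw [intervalIntegral.integral_const_mul, hI, a2, a3]
    ring
  · exact (hcont.continuousOn.integrableOn_compact
      (isCompact_uIcc.prod isCompact_uIcc)).mono_set
      (Set.prod_mono Set.uIoc_subset_uIcc Set.uIoc_subset_uIcc)
end

section
/- Let n ≥ 0 be an integer, m > 0, K ≥ 0, γ̄ > 0 and s ≤ 0. Then the generalized moment generating function of order n of the squared Rician Shadowed distribution admits the closed form ∫₀^∞ xⁿ exp(sx) f_RS(x; γ̄, m, K) dx = n! · m^m · (1+K−γ̄s)^{m−n−1} · γ̄ⁿ · Σ_{l=0}^n C(n,l) · ((m)_l / l!) · (1+K)^{l+1} K^l / ( m(1+K) − (m+K)γ̄s )^{m+l}. -/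
/-!
Expanding `₁F₁` in its power series and integrating term by term against `xⁿ exp(-αx)`, with
`α = (1+K)/γ̄ - s`, gives (Gamma integrals) `n! / α^(n+1) · ∑ₖ (m)ₖ/k! · C(k+n,n) · zᵏ` with
`z = K(1+K)/((m+K)(1+K-γ̄s)) ∈ [0,1)`. All terms are nonnegative, so the interchange only needs
this series to converge. Vandermonde's identity `C(k+n,n) = ∑ₗ C(n,l) C(k,l)` splits it into finitely
many series `∑ₖ (m)ₖ/k! · C(k,l) · zᵏ`, and shifting `k` by `l` reduces each of these to the binomial
series, with value `(m)ₗ/l! · zˡ (1-z)^(-(m+l))`. Finally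
`1 - z = (m(1+K) - (m+K)γ̄s) / ((m+K)(1+K-γ̄s))`.
-/

open MeasureTheory Real

/-- Squared Rician Shadowed density. -/
noncomputable def fRS (g m K x : ℝ) : ℝ :=
  (m / (m + K)) ^ m * ((1 + K) / g) * Real.exp (-(1 + K) * x / g) *
    hyp1F1 m (K * (1 + K) * x / (g * (m + K)))

lemma poch_add (a : ℝ) (l j : ℕ) : poch a (l + j) = poch a l * poch (a + l) j := by
  simp [poch, Finset.prod_range_add, add_assoc]

lemma poch_nonneg {a : ℝ} (ha : 0 < a) (k : ℕ) : 0 ≤ poch a k :=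
  Finset.prod_nonneg fun i _ => by positivity

lemma poch_div_factorial (a : ℝ) (k : ℕ) :
    Ring.choose (a + k - 1) k = poch a k / (k.factorial : ℝ) := by
  have h := Ring.factorial_nsmul_multichoose_eq_ascPochhammer a k
  rw [Ring.multichoose_eq, Polynomial.ascPochhammer_smeval_eq_eval, nsmul_eq_mul] at h
  have h2 : (ascPochhammer ℝ k).eval a = poch a k := by
    clear h
    induction k with
    | zero => simp [poch]
    | succ k ih => rw [ascPochhammer_succ_eval, ih, poch, poch, Finset.prod_range_succ]
  rw [← h2, ← h]
  field_simp

/-- The binomial series for `(1 - z)^(-a)`. -/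
lemma hasSum_poch (a : ℝ) {z : ℝ} (hz0 : 0 ≤ z) (hz : z < 1) :
    HasSum (fun j : ℕ => poch a j / (j.factorial : ℝ) * z ^ j) ((1 - z) ^ (-a)) := by
  have h := (Real.one_div_one_sub_rpow_hasFPowerSeriesOnBall_zero a).hasSum (y := z) (by
    simpa [abs_of_nonneg hz0, enorm_eq_nnnorm, ← NNReal.coe_lt_coe] using hz)
  simp only [zero_add, FormalMultilinearSeries.ofScalars_apply_eq, poch_div_factorial,
    smul_eq_mul] at h
  rw [Real.rpow_neg (by linarith), ← one_div]
  exact h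

/-- The binomial series differentiated `l` times, up to normalization. -/
lemma hasSum_poch_choose (a : ℝ) {z : ℝ} (hz0 : 0 ≤ z) (hz : z < 1) (l : ℕ) :
    HasSum (fun k : ℕ => poch a k / (k.factorial : ℝ) * (k.choose l : ℝ) * z ^ k)
      (poch a l / (l.factorial : ℝ) * z ^ l * (1 - z) ^ (-(a + l))) := by
  rw [← (add_right_injective l).hasSum_iff]
  · refine ((hasSum_poch (a + l) hz0 hz).mul_left _).congr_fun ?_
    intro j
    have h : ((l + j).choose l : ℝ) * (l.factorial * j.factorial) = (l + j).factorial := by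
      have := Nat.add_choose_mul_factorial_mul_factorial l j
      rw [← Nat.choose_symm_add] at this
      rw [← mul_assoc]; exact_mod_cast this
    have h' : ((l + j).choose l : ℝ) = (l + j).factorial / (l.factorial * j.factorial) := by
      rw [← h]; field_simp
    simp only [Function.comp, poch_add, pow_add, h']
    field_simp
  · intro k hk
    have : k < l := by
      by_contra! h
      exact hk ⟨k - l, by simp; omega⟩
    simp [Nat.choose_eq_zero_of_lt this]

lemma choose_vandermonde (n k : ℕ) :
    (k + n).choose n = ∑ l ∈ Finset.range (n + 1), n.choose l * k.choose l := by
  rw [Nat.add_choose_eq, Finset.Nat.sum_antidiagonal_eq_sum_range_succ_mk]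
  refine Finset.sum_congr rfl fun l hl => ?_
  rw [Nat.choose_symm (by simpa [Nat.lt_succ_iff] using hl), mul_comm]

lemma hasSum_poch_add_choose (a : ℝ) {z : ℝ} (hz0 : 0 ≤ z) (hz : z < 1) (n : ℕ) :
    HasSum (fun k : ℕ => poch a k / (k.factorial : ℝ) * ((k + n).choose n : ℝ) * z ^ k)
      (∑ l ∈ Finset.range (n + 1), (n.choose l : ℝ) *
        (poch a l / (l.factorial : ℝ) * z ^ l * (1 - z) ^ (-(a + l)))) := by
  refine (hasSum_sum fun l (_ : l ∈ Finset.range (n + 1)) =>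
    (hasSum_poch_choose a hz0 hz l).mul_left (n.choose l : ℝ)).congr_fun ?_
  intro k
  rw [choose_vandermonde]
  push_cast
  rw [Finset.mul_sum, Finset.sum_mul]
  exact Finset.sum_congr rfl fun l _ => by ring

lemma integral_pow_mul_exp (N : ℕ) {α : ℝ} (hα : 0 < α) :
    ∫ x in Set.Ioi (0 : ℝ), x ^ N * Real.exp (-(α * x)) = N.factorial / α ^ (N + 1) := by
  have h := Real.integral_rpow_mul_exp_neg_mul_Ioi (a := (N : ℝ) + 1) (by positivity) hα
  rw [Real.Gamma_nat_eq_factorial] at h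
  simp only [add_sub_cancel_right, Real.rpow_natCast] at h
  rw [h, ← Nat.cast_succ, Real.rpow_natCast]
  rw [one_div, inv_pow]; field_simp

lemma integrableOn_pow_mul_exp (N : ℕ) {α : ℝ} (hα : 0 < α) :
    IntegrableOn (fun x : ℝ => x ^ N * Real.exp (-(α * x))) (Set.Ioi 0) := by
  -- a function with nonzero Bochner integral is integrable
  by_contra h
  have h1 := integral_pow_mul_exp N hα
  rw [integral_undef h] at h1
  have : 0 < (N.factorial : ℝ) / α ^ (N + 1) := by positivity
  linarith

/-- Term-by-term integration of the series of `₁F₁`. -/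
lemma integral_hyp1F1 (n : ℕ) {m α z : ℝ} (hm : 0 < m) (hα : 0 < α) (hz0 : 0 ≤ z) (hz : z < 1) :
    ∫ x in Set.Ioi (0 : ℝ), x ^ n * Real.exp (-(α * x)) * hyp1F1 m (z * α * x) =
      n.factorial / α ^ (n + 1) * ∑ l ∈ Finset.range (n + 1), (n.choose l : ℝ) *
        (poch m l / (l.factorial : ℝ) * z ^ l * (1 - z) ^ (-(m + l))) := by
  set c : ℕ → ℝ := fun k => poch m k * (z * α) ^ k / (k.factorial : ℝ) ^ 2 with hc
  have hc0 : ∀ k, 0 ≤ c k := fun k => by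
    have := poch_nonneg hm k
    positivity
  set F : ℕ → ℝ → ℝ := fun k x => c k * (x ^ (n + k) * Real.exp (-(α * x))) with hF
  have hFint : ∀ k, Integrable (F k) (volume.restrict (Set.Ioi 0)) := fun k =>
    (integrableOn_pow_mul_exp (n + k) hα).const_mul (c k)
  have hFval : ∀ k, ∫ x in Set.Ioi (0 : ℝ), F k x = n.factorial / α ^ (n + 1) *
      (poch m k / (k.factorial : ℝ) * ((k + n).choose n : ℝ) * z ^ k) := by
    intro k
    rw [integral_const_mul, integral_pow_mul_exp _ hα]
    have h : ((n + k).factorial : ℝ) = (k + n).choose n * (k.factorial * n.factorial) := by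
      have := Nat.add_choose_mul_factorial_mul_factorial k n
      rw [add_comm n k, ← this]; push_cast; ring
    simp only [hc]
    rw [h, show n + k + 1 = k + (n + 1) by ring, pow_add α, mul_pow]
    field_simp
  have hFnorm : ∀ k, ∫ x in Set.Ioi (0 : ℝ), ‖F k x‖ = ∫ x in Set.Ioi (0 : ℝ), F k x := by
    intro k
    refine setIntegral_congr_fun measurableSet_Ioi fun x hx => ?_
    have hx' : (0 : ℝ) < x := hx
    exact Real.norm_of_nonneg (mul_nonneg (hc0 k) (by positivity))
  have hS := (hasSum_poch_add_choose m hz0 hz n).mul_left ((n.factorial : ℝ) / α ^ (n + 1))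
  have hI := hasSum_integral_of_summable_integral_norm hFint (by
    simp only [hFnorm, hFval]; exact hS.summable)
  simp only [hFval] at hI
  rw [← hI.unique hS]
  refine integral_congr_ae (Filter.Eventually.of_forall fun x => ?_)
  simp only [hF, hc, hyp1F1]
  rw [← tsum_mul_left]
  refine tsum_congr fun k => ?_
  rw [mul_pow (z * α), pow_add]
  ring

theorem stmt4 (n : ℕ) (m K g s : ℝ) (hm : 0 < m) (hK : 0 ≤ K) (hg : 0 < g) (hs : s ≤ 0) :
    ∫ x in Set.Ioi (0 : ℝ), x ^ n * Real.exp (s * x) * fRS g m K x =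
      (Nat.factorial n : ℝ) * m ^ m * (1 + K - g * s) ^ (m - n - 1 : ℝ) * g ^ n *
        ∑ l ∈ Finset.range (n + 1), (n.choose l : ℝ) * (poch m l / (Nat.factorial l : ℝ)) *
          ((1 + K) ^ (l + 1) * K ^ l / (m * (1 + K) - (m + K) * g * s) ^ (m + l : ℝ)) := by
  have hA : 0 < 1 + K - g * s := by nlinarith
  have hmK : 0 < m + K := by linarith
  have hgs : g * s ≤ 0 := mul_nonpos_of_nonneg_of_nonpos hg.le hs
  have hD : 0 < m * (1 + K) - (m + K) * g * s := by nlinarith [mul_nonneg hmK.le (neg_nonneg.2 hgs)]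
  set A := 1 + K - g * s with hAdef
  set D := m * (1 + K) - (m + K) * g * s with hDdef
  have h1z : 1 - K * (1 + K) / ((m + K) * A) = D / ((m + K) * A) := by
    field_simp
    rw [hAdef, hDdef]; ring
  have hz0 : 0 ≤ K * (1 + K) / ((m + K) * A) := by positivity
  have hz1 : K * (1 + K) / ((m + K) * A) < 1 := by
    have : 0 < D / ((m + K) * A) := by positivity
    linarith
  have hα : 0 < A / g := by positivity
  have key := integral_hyp1F1 n hm hα hz0 hz1
  have hint : ∫ x in Set.Ioi (0 : ℝ), x ^ n * Real.exp (s * x) * fRS g m K x =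
      (m / (m + K)) ^ m * ((1 + K) / g) * ∫ x in Set.Ioi (0 : ℝ), x ^ n *
        Real.exp (-(A / g * x)) * hyp1F1 m (K * (1 + K) / ((m + K) * A) * (A / g) * x) := by
    rw [← integral_const_mul]
    refine integral_congr_ae (Filter.Eventually.of_forall fun x => ?_)
    have e1 : Real.exp (-(A / g * x)) = Real.exp (s * x) * Real.exp (-(1 + K) * x / g) := by
      rw [← Real.exp_add]
      congr 1
      rw [hAdef]
      field_simp
      ring
    have e2 : K * (1 + K) / ((m + K) * A) * (A / g) * x = K * (1 + K) * x / (g * (m + K)) := by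
      field_simp
    simp only [fRS, e1, e2]
    ring
  rw [hint, key, h1z]
  simp only [Finset.mul_sum]
  refine Finset.sum_congr rfl fun l _ => ?_
  have e3 : (D / ((m + K) * A)) ^ (-(m + l)) =
      (m + K) ^ m * (m + K) ^ l * (A ^ m * A ^ l) / D ^ (m + l : ℝ) := by
    rw [Real.rpow_neg (by positivity), Real.div_rpow hD.le (by positivity),
      Real.mul_rpow hmK.le hA.le, Real.rpow_add hmK, Real.rpow_add hA, Real.rpow_natCast,
      Real.rpow_natCast, inv_div]
  have e4 : A ^ (m - n - 1 : ℝ) = A ^ m / A ^ (n + 1) := by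
    rw [sub_sub, Real.rpow_sub hA, ← Nat.cast_succ, Real.rpow_natCast]
  have p1 : 0 < (m + K) ^ m := Real.rpow_pos_of_pos hmK m
  have p2 : 0 < D ^ (m + l : ℝ) := Real.rpow_pos_of_pos hD _
  rw [e3, e4, Real.div_rpow hm.le hmK.le, div_pow, div_pow, mul_pow, mul_pow]
  generalize (m + K) ^ m = X at *
  generalize D ^ (m + l : ℝ) = Y at *
  generalize m ^ m = Z at *
  generalize A ^ m = W at *
  field_simp
  ring
end

section
/- Let m ≥ 1 be an integer, γ̄ > 0, K > 0, 0 ≤ Δ ≤ 1 and x ≥ 0. Then the FTR density is a continuous mixture of squared Nakagami densities: f_FTR(x; γ̄, m, K, Δ) = (1/π) ∫₀^π Σ_{i=0}^{m−1} C_i(θ) · Ω(θ)^{−(m−i)} · x^{m−i−1} · exp(−x/Ω(θ)) / (m−i−1)! dθ, where C_i(θ) = C(m−1,i) · m^i (K(1+Δcos θ))^{m−1−i} / (m + K(1+Δcos θ))^{m−1} and Ω(θ) = (γ̄/(1+K)) · (m + K(1+Δcos θ))/m. -/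
/-!
Both sides are averages over `θ`, and the integrands agree for every `θ`. With
`a = K (1 + Δ cos θ) ≥ 0`, `s = (1 + K) / g` and `z = a s x / (m + a)`, the key is Kummer's
transformation at a positive integer first parameter, which turns the hypergeometric series into
`e ^ z` times a polynomial (`hyp1F1_natCast_succ`):
`₁F₁(n + 1; 1; z) = e ^ z ∑ j ≤ n, C(n, j) z ^ j / j!`.
It holds because the coefficient of `z ^ k` in the series is `C(n + k, n) / k!`, which
Vandermonde's identity splits as `∑ j ≤ n, C(n, j) C(k, j) / k!`, while
`∑ k, C(k, j) z ^ k / k! = e ^ z z ^ j / j!`.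
Since `-s x + z = -x / Ω(θ)`, the exponentials match, and the term `j` of the polynomial is the
term `i = m - 1 - j` of the mixture.
-/

open MeasureTheory Real

/-- Mixture coefficient `C_i(θ)`. -/
noncomputable def Cmix (m : ℕ) (K Δ θ : ℝ) (i : ℕ) : ℝ :=
  ((m - 1).choose i : ℝ) * (m : ℝ) ^ i * (K * (1 + Δ * Real.cos θ)) ^ (m - 1 - i) /
    ((m : ℝ) + K * (1 + Δ * Real.cos θ)) ^ (m - 1)

/-- Scale parameter `Ω(θ)`. -/
noncomputable def Ωmix (m : ℕ) (g K Δ θ : ℝ) : ℝ :=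
  (g / (1 + K)) * (((m : ℝ) + K * (1 + Δ * Real.cos θ)) / (m : ℝ))

lemma poch_natCast_succ (n k : ℕ) :
    poch ((n + 1 : ℕ) : ℝ) k = ((n + k).choose n : ℝ) * (k.factorial : ℝ) := by
  have h : poch ((n + 1 : ℕ) : ℝ) k = ((n + 1).ascFactorial k : ℝ) := by
    rw [Nat.ascFactorial_eq_prod_range, poch]
    push_cast
    rfl
  rw [h, Nat.ascFactorial_eq_factorial_mul_choose, Nat.choose_symm_add]
  push_cast
  ring

lemma hasSum_choose_mul_pow_div_factorial (j : ℕ) (z : ℝ) :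
    HasSum (fun k : ℕ => (k.choose j : ℝ) * (z ^ k / (k.factorial : ℝ)))
      (Real.exp z * (z ^ j / (j.factorial : ℝ))) := by
  -- The terms with `k < j` vanish, so it suffices to sum over `k = l + j`.
  rw [← (add_left_injective j).hasSum_iff]
  · have h := (NormedSpace.expSeries_div_hasSum_exp z).mul_right (z ^ j / (j.factorial : ℝ))
    rw [← Real.exp_eq_exp_ℝ] at h
    refine Eq.subst (motive := fun f : ℕ → ℝ => HasSum f _) (funext fun l => ?_) h
    have hc : ((l + j).choose j : ℝ) * (l.factorial : ℝ) * (j.factorial : ℝ)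
        = ((l + j).factorial : ℝ) := by
      have := Nat.add_choose_mul_factorial_mul_factorial l j
      exact_mod_cast this
    have h1 : (l.factorial : ℝ) ≠ 0 := by positivity
    have h2 : (j.factorial : ℝ) ≠ 0 := by positivity
    have h3 : ((l + j).factorial : ℝ) ≠ 0 := by positivity
    simp only [Function.comp]
    field_simp
    rw [← hc]
    ring
  · intro k hk
    have : k < j := by
      by_contra hle
      exact hk ⟨k - j, by simp only; omega⟩
    simp [Nat.choose_eq_zero_of_lt this]

/-- Kummer's transformation for a positive integer first parameter. -/
lemma hyp1F1_natCast_succ (n : ℕ) (z : ℝ) :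
    hyp1F1 ((n + 1 : ℕ) : ℝ) z =
      Real.exp z * ∑ j ∈ Finset.range (n + 1), (n.choose j : ℝ) * (z ^ j / (j.factorial : ℝ)) := by
  have h := hasSum_sum (s := Finset.range (n + 1)) fun j _ =>
    (hasSum_choose_mul_pow_div_factorial j z).mul_left (n.choose j : ℝ)
  have hv (k : ℕ) : ((n + k).choose n : ℝ) =
      ∑ j ∈ Finset.range (n + 1), (n.choose j : ℝ) * (k.choose j : ℝ) := by
    rw [add_comm n k, Nat.add_choose_eq, Finset.Nat.sum_antidiagonal_eq_sum_range_succ_mk]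
    push_cast
    refine Finset.sum_congr rfl fun j hj => ?_
    rw [Nat.choose_symm (Nat.lt_succ_iff.mp (Finset.mem_range.mp hj)), mul_comm]
  have hterm (k : ℕ) : poch ((n + 1 : ℕ) : ℝ) k * z ^ k / (k.factorial : ℝ) ^ 2 =
      ∑ j ∈ Finset.range (n + 1),
        (n.choose j : ℝ) * ((k.choose j : ℝ) * (z ^ k / (k.factorial : ℝ))) := by
    have h1 : (k.factorial : ℝ) ≠ 0 := by positivity
    simp only [← mul_assoc]
    rw [← Finset.sum_mul, ← hv, poch_natCast_succ]
    field_simp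
  unfold hyp1F1
  simp only [hterm]
  rw [h.tsum_eq, Finset.mul_sum]
  exact Finset.sum_congr rfl fun j _ => by ring

theorem stmt8 (m : ℕ) (hm : 1 ≤ m) (g K Δ x : ℝ) (hg : 0 < g) (hK : 0 < K)
    (hΔ0 : 0 ≤ Δ) (hΔ1 : Δ ≤ 1) (hx : 0 ≤ x) :
    fFTR g (m : ℝ) K Δ x =
      (1 / π) * ∫ θ in (0 : ℝ)..π,
        ∑ i ∈ Finset.range m, Cmix m K Δ θ i *
          (x ^ (m - i - 1) * Real.exp (-x / Ωmix m g K Δ θ) /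
            ((Ωmix m g K Δ θ) ^ (m - i) * (Nat.factorial (m - i - 1) : ℝ))) := by
  obtain ⟨n, rfl⟩ : ∃ n, m = n + 1 := ⟨m - 1, by omega⟩
  unfold fFTR
  congr 1
  refine intervalIntegral.integral_congr fun θ _ => ?_
  have hc : 0 ≤ 1 + Δ * Real.cos θ := by
    nlinarith [Real.neg_one_le_cos θ, Real.cos_le_one θ]
  have ha : 0 ≤ K * (1 + Δ * Real.cos θ) := mul_nonneg hK.le hc
  simp only [Cmix, Ωmix, mul_right_comm K (1 + K) (1 + Δ * Real.cos θ)]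
  generalize K * (1 + Δ * Real.cos θ) = a at ha
  have hM : (0 : ℝ) < ((n + 1 : ℕ) : ℝ) := by positivity
  rw [Real.rpow_natCast, hyp1F1_natCast_succ]
  generalize ((n + 1 : ℕ) : ℝ) = M at hM
  have hMa : 0 < M + a := by positivity
  have hK1 : 0 < 1 + K := by positivity
  -- The two exponentials on the left combine to the one of the Nakagami components.
  have hexp : Real.exp (-(1 + K) * x / g) * Real.exp (a * (1 + K) * x / (g * (M + a))) =
      Real.exp (-x / (g / (1 + K) * ((M + a) / M))) := by
    rw [← Real.exp_add]
    congr 1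
    field_simp
    ring
  rw [← mul_assoc, mul_assoc _ (Real.exp _) (Real.exp _), hexp, Finset.mul_sum,
    ← Finset.sum_range_reflect]
  refine Finset.sum_congr rfl fun i hi => ?_
  obtain ⟨j, rfl⟩ : ∃ j, n = i + j := ⟨n - i, by have := Finset.mem_range.mp hi; omega⟩
  have e1 : i + j + 1 - 1 - i = j := by omega
  have e2 : i + j + 1 - i = j + 1 := by omega
  have e3 : i + j + 1 - 1 = i + j := by omega
  have e4 : i + j + 1 - i - 1 = j := by omega
  rw [e1, e4, e2, e3, Nat.choose_symm_add]
  generalize Real.exp _ = E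
  have hf : (j.factorial : ℝ) ≠ 0 := by positivity
  simp only [div_pow, mul_pow]
  field_simp
  ring
end

section
/- Let m ≥ 1 be an integer, γ̄ > 0, K > 0, 0 ≤ Δ ≤ 1, let 0 ≤ a ≤ b ≤ ∞, and let h : ℝ → ℝ be a measurable function such that ∫_a^b |h(x)| f_FTR(x; γ̄, m, K, Δ) dx < ∞. Then ∫_a^b h(x) f_FTR(x; γ̄, m, K, Δ) dx = (1/π) ∫₀^π Σ_{i=0}^{m−1} C_i(θ) · ( ∫_a^b h(x) f_Nak(x; (m−i)Ω(θ), m−i) dx ) dθ, where C_i(θ) = C(m−1,i) · m^i (K(1+Δcos θ))^{m−1−i} / (m + K(1+Δcos θ))^{m−1} and Ω(θ) = (γ̄/(1+K)) · (m + K(1+Δcos θ))/m. That is, for integer m, any performance metric obtained by averaging h over the FTR density equals a finite-range integral of a finite mixture of the corresponding Nakagami-m metrics. -/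
/-!
For an integer `m ≥ 1`, Kummer's transformation turns the hypergeometric factor into a polynomial,
`₁F₁(m; 1; z) = e^z ∑_{n < m} C(m-1, n) z^n / n!` (`hyp1F1_nat`; it is the Cauchy product of the two
series combined with Vandermonde's identity).  With `z = K(1+K)(1+Δ cos θ)x / (γ̄(m + K(1+Δ cos θ)))`
the exponents combine to `-x / Ω(θ)`, and term `n = m-1-i` becomes `C_i(θ)` times the squared Nakagami
density with parameters `((m-i)Ω(θ), m-i)` (`ftr_integrand_eq`).

It remains to exchange the integrals over `x` and `θ`.  The mixture terms are nonnegative for `x ≥ 0`,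
so integrability of `h · f_FTR` is integrability of the double integrand (Tonelli) and Fubini applies.
Nonnegativity also lets each term be dominated by the whole sum, so that the `x`-integral splits over
the sum for almost every `θ`.
-/

open MeasureTheory Real

/-- Squared Nakagami density `f_Nak(x; γ̂, m̂)`. -/
noncomputable def fNak (g : ℝ) (mh : ℕ) (x : ℝ) : ℝ :=
  ((mh : ℝ) / g) ^ mh * x ^ (mh - 1) * Real.exp (-x * mh / g) / (Nat.factorial (mh - 1) : ℝ)

lemma poch_nat (M k : ℕ) :
    poch ((M + 1 : ℕ) : ℝ) k = (k.factorial : ℝ) * ((M + k).choose k : ℝ) := by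
  have h1 : poch ((M + 1 : ℕ) : ℝ) k = (((M + 1).ascFactorial k : ℕ) : ℝ) := by
    rw [Nat.ascFactorial_eq_prod_range, poch]
    push_cast
    rfl
  rw [h1, Nat.ascFactorial_eq_factorial_mul_choose]
  push_cast
  rfl

/-- Kummer's transformation at a positive integer first parameter, with the terminating series
written out. -/
lemma hyp1F1_nat (M : ℕ) (z : ℝ) :
    hyp1F1 ((M + 1 : ℕ) : ℝ) z =
      Real.exp z * ∑ n ∈ Finset.range (M + 1), (M.choose n : ℝ) * z ^ n / (n.factorial : ℝ) := by
  have hsupp : ∀ n ∉ Finset.range (M + 1), (M.choose n : ℝ) * z ^ n / (n.factorial : ℝ) = 0 := by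
    intro n hn
    rw [Nat.choose_eq_zero_of_lt (by simpa using hn)]
    simp
  have hs1 : Summable fun n : ℕ => ‖(M.choose n : ℝ) * z ^ n / (n.factorial : ℝ)‖ :=
    summable_of_ne_finset_zero (s := Finset.range (M + 1)) fun n hn => by rw [hsupp n hn, norm_zero]
  have hs2 : Summable fun n : ℕ => ‖z ^ n / (n.factorial : ℝ)‖ :=
    NormedSpace.norm_expSeries_div_summable z
  have hexp : Real.exp z = ∑' n : ℕ, z ^ n / (n.factorial : ℝ) := by
    rw [Real.exp_eq_exp_ℝ, NormedSpace.exp_eq_tsum_div]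
  rw [mul_comm, ← tsum_eq_sum (L := .unconditional ℕ) hsupp, hexp,
    tsum_mul_tsum_eq_tsum_sum_antidiagonal_of_summable_norm hs1 hs2, hyp1F1]
  refine tsum_congr fun k => ?_
  rw [poch_nat, Nat.add_choose_eq]
  push_cast
  rw [Finset.mul_sum, Finset.sum_mul, Finset.sum_div]
  refine Finset.sum_congr rfl fun p hp => ?_
  rw [Finset.HasAntidiagonal.mem_antidiagonal] at hp
  subst hp
  have hc : (((p.1 + p.2).choose p.2 : ℕ) : ℝ) * p.1.factorial * p.2.factorial
      = (p.1 + p.2).factorial := by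
    exact_mod_cast Nat.add_choose_mul_factorial_mul_factorial p.1 p.2
  have h1 : (p.1.factorial : ℝ) ≠ 0 := by positivity
  have h2 : (p.2.factorial : ℝ) ≠ 0 := by positivity
  have h3 : ((p.1 + p.2).factorial : ℝ) ≠ 0 := by positivity
  field_simp
  rw [← hc]
  ring

lemma one_add_mul_cos_nonneg {Δ : ℝ} (h0 : 0 ≤ Δ) (h1 : Δ ≤ 1) (θ : ℝ) :
    0 ≤ 1 + Δ * Real.cos θ := by
  nlinarith [Real.neg_one_le_cos θ]

/-- The Nakagami density in the form that occurs in the mixture: the factor `m̂` of the scale cancels,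
leaving a gamma density of scale `W`. -/
lemma fNak_scaled (n : ℕ) (W x : ℝ) :
    fNak ((n + 1 : ℕ) * W) (n + 1) x =
      (1 / W) ^ (n + 1) * x ^ n * Real.exp (-x / W) / (n.factorial : ℝ) := by
  have hn : ((n + 1 : ℕ) : ℝ) ≠ 0 := by positivity
  rw [fNak, Nat.add_sub_cancel, show ((n + 1 : ℕ) : ℝ) / ((n + 1 : ℕ) * W) = 1 / W by
    rw [div_mul_eq_div_div, div_self hn], mul_comm ((n + 1 : ℕ) : ℝ) W, mul_div_mul_right _ _ hn]

/-- The `i`-th mixture term `C_i(θ) f_Nak(x; (m-i)Ω(θ), m-i)`. -/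
noncomputable def mixTerm (m : ℕ) (g K Δ x θ : ℝ) (i : ℕ) : ℝ :=
  Cmix m K Δ θ i * fNak ((m - i : ℕ) * Ωmix m g K Δ θ) (m - i) x

lemma Ωmix_pos {M : ℕ} {g K Δ : ℝ} (hg : 0 < g) (hK : 0 < K) (h0 : 0 ≤ Δ) (h1 : Δ ≤ 1) (θ : ℝ) :
    0 < Ωmix (M + 1) g K Δ θ := by
  have hu := mul_nonneg hK.le (one_add_mul_cos_nonneg h0 h1 θ)
  rw [Ωmix]
  positivity

/-- Pointwise in `θ`, the FTR integrand is a finite mixture of Nakagami densities. -/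
lemma ftr_integrand_eq {M : ℕ} {g K Δ : ℝ} (hg : 0 < g) (hK : 0 < K) (h0 : 0 ≤ Δ) (h1 : Δ ≤ 1)
    (x θ : ℝ) :
    (((M + 1 : ℕ) : ℝ) / ((M + 1 : ℕ) + K * (1 + Δ * Real.cos θ))) ^ ((M + 1 : ℕ) : ℝ) *
        ((1 + K) / g) * Real.exp (-(1 + K) * x / g) *
      hyp1F1 ((M + 1 : ℕ) : ℝ) (K * (1 + K) * (1 + Δ * Real.cos θ) * x /
        (g * ((M + 1 : ℕ) + K * (1 + Δ * Real.cos θ)))) =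
    ∑ i ∈ Finset.range (M + 1), mixTerm (M + 1) g K Δ x θ i := by
  have hu := mul_nonneg hK.le (one_add_mul_cos_nonneg h0 h1 θ)
  rw [hyp1F1_nat, Real.rpow_natCast,
    ← Finset.sum_range_reflect (fun i => mixTerm (M + 1) g K Δ x θ i), Finset.mul_sum,
    Finset.mul_sum]
  refine Finset.sum_congr rfl fun n hn => ?_
  have hn' : n ≤ M := by simpa [Nat.lt_succ_iff] using hn
  obtain ⟨j, rfl⟩ := Nat.exists_eq_add_of_le hn'
  have e1 : n + j + 1 - 1 - n = j := by omega
  have e2 : n + j + 1 - j = n + 1 := by omega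
  have e3 : n + j + 1 - 1 - j = n := by omega
  rw [mixTerm, e1, e2, fNak_scaled, Cmix, e3, Nat.add_sub_cancel, Nat.choose_symm_add, Ωmix]
  set u := 1 + Δ * Real.cos θ
  have hmp : (0 : ℝ) < ((n + j + 1 : ℕ) : ℝ) := by positivity
  generalize ((n + j + 1 : ℕ) : ℝ) = m at hmp ⊢
  have hL : 0 < m + K * u := by positivity
  have hexp : Real.exp (-x / (g / (1 + K) * ((m + K * u) / m))) =
      Real.exp (-(1 + K) * x / g) * Real.exp (K * (1 + K) * u * x / (g * (m + K * u))) := by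
    rw [← Real.exp_add]
    congr 1
    field_simp
    ring
  rw [hexp]
  have hf : (n.factorial : ℝ) ≠ 0 := by positivity
  generalize hLL : m + K * u = L at *
  have hK1 : 0 < 1 + K := by positivity
  generalize 1 + K = c at *
  generalize Real.exp (-c * x / g) = E1
  generalize Real.exp (K * c * u * x / (g * L)) = E2
  simp only [div_pow, mul_pow, one_pow]
  field_simp
  ring

lemma mixTerm_nonneg {M : ℕ} {g K Δ : ℝ} (hg : 0 < g) (hK : 0 < K) (h0 : 0 ≤ Δ) (h1 : Δ ≤ 1)
    {x : ℝ} (hx : 0 ≤ x) (θ : ℝ) (i : ℕ) : 0 ≤ mixTerm (M + 1) g K Δ x θ i := by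
  have hu := mul_nonneg hK.le (one_add_mul_cos_nonneg h0 h1 θ)
  have hW := Ωmix_pos (M := M) hg hK h0 h1 θ
  rw [mixTerm, Cmix, fNak]
  positivity

lemma continuous_mixTerm {M : ℕ} {g K Δ : ℝ} (hg : 0 < g) (hK : 0 < K) (h0 : 0 ≤ Δ) (h1 : Δ ≤ 1)
    {i : ℕ} (hi : i ∈ Finset.range (M + 1)) :
    Continuous fun p : ℝ × ℝ => mixTerm (M + 1) g K Δ p.1 p.2 i := by
  have hi' : i ≤ M := by simpa [Nat.lt_succ_iff] using hi
  obtain ⟨n, rfl⟩ := Nat.exists_eq_add_of_le' hi'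
  have e2 : n + i + 1 - i = n + 1 := by omega
  have hL : ∀ p : ℝ × ℝ, ((n + i + 1 : ℕ) : ℝ) + K * (1 + Δ * Real.cos p.2) ≠ 0 := fun p => by
    have hu := mul_nonneg hK.le (one_add_mul_cos_nonneg h0 h1 p.2)
    positivity
  have hW : ∀ p : ℝ × ℝ, Ωmix (n + i + 1) g K Δ p.2 ≠ 0 := fun p =>
    (Ωmix_pos hg hK h0 h1 p.2).ne'
  have hWc : Continuous fun p : ℝ × ℝ => Ωmix (n + i + 1) g K Δ p.2 := by
    unfold Ωmix
    fun_prop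
  have hCc : Continuous fun p : ℝ × ℝ => Cmix (n + i + 1) K Δ p.2 i := by
    unfold Cmix
    exact Continuous.div (by fun_prop) (by fun_prop) fun p => pow_ne_zero _ (hL p)
  simp only [mixTerm, e2, fNak_scaled]
  refine hCc.mul (Continuous.div_const (Continuous.mul (Continuous.mul ?_ (by fun_prop)) ?_) _)
  · exact (continuous_const.div hWc hW).pow _
  · exact Real.continuous_exp.comp (continuous_fst.neg.div hWc hW)

/-- Fubini step: for a nonnegative mixture `∑ i, T i x θ`, the average of `h` over the `θ`-mixture of
the sum is the `θ`-average of the termwise integrals. -/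
lemma integral_mixture_swap {N : ℕ} {S : Set ℝ} (hS : MeasurableSet S) (T : ℕ → ℝ → ℝ → ℝ)
    (hT : ∀ i ∈ Finset.range N, Continuous fun p : ℝ × ℝ => T i p.1 p.2)
    (hT0 : ∀ i, ∀ x ∈ S, ∀ θ, 0 ≤ T i x θ)
    (h : ℝ → ℝ) (hmeas : Measurable h)
    (hint : IntegrableOn
      (fun x => h x * ∫ θ in (0 : ℝ)..π, ∑ i ∈ Finset.range N, T i x θ) S volume) :
    ∫ x in S, h x * ∫ θ in (0 : ℝ)..π, ∑ i ∈ Finset.range N, T i x θ =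
      ∫ θ in (0 : ℝ)..π, ∑ i ∈ Finset.range N, ∫ x in S, h x * T i x θ := by
  set F : ℝ → ℝ → ℝ := fun x θ => ∑ i ∈ Finset.range N, T i x θ with hF
  have hFc : Continuous fun p : ℝ × ℝ => F p.1 p.2 := continuous_finsetSum _ hT
  have hF0 : ∀ x ∈ S, ∀ θ, 0 ≤ F x θ := fun x hx θ => Finset.sum_nonneg fun i _ => hT0 i x hx θ
  set μ := volume.restrict S
  set ν := volume.restrict (Set.Ioc (0 : ℝ) π)
  have hsm : AEStronglyMeasurable (fun p : ℝ × ℝ => h p.1 * F p.1 p.2) (μ.prod ν) :=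
    ((hmeas.comp measurable_fst).mul hFc.measurable).aestronglyMeasurable
  have hx : ∀ x, Integrable (fun θ => h x * F x θ) ν := fun x => by
    have hc : Continuous fun θ => h x * F x θ :=
      continuous_const.mul (hFc.comp (by fun_prop : Continuous fun θ : ℝ => (x, θ)))
    exact (hc.integrableOn_Icc (a := 0) (b := π)).mono_set Set.Ioc_subset_Icc_self
  have hprod : Integrable (fun p : ℝ × ℝ => h p.1 * F p.1 p.2) (μ.prod ν) := by
    rw [integrable_prod_iff hsm]
    refine ⟨Filter.Eventually.of_forall hx, ?_⟩
    refine hint.norm.congr ?_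
    filter_upwards [ae_restrict_mem hS] with x hxS
    have hI : 0 ≤ ∫ θ, F x θ ∂ν := integral_nonneg fun θ => hF0 x hxS θ
    simp only [intervalIntegral.integral_of_le Real.pi_pos.le, norm_mul, integral_const_mul,
      fun θ => Real.norm_of_nonneg (hF0 x hxS θ)]
    exact congrArg (‖h x‖ * ·) (Real.norm_of_nonneg hI)
  have hswap := integral_integral_swap (f := fun x θ => h x * F x θ) hprod
  rw [intervalIntegral.integral_of_le Real.pi_pos.le]
  simp only [intervalIntegral.integral_of_le Real.pi_pos.le, ← integral_const_mul]
  refine hswap.trans (integral_congr_ae ?_)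
  filter_upwards [hprod.prod_left_ae] with θ hθ
  simp only [hF, Finset.mul_sum]
  refine integral_finsetSum _ fun i hi => hθ.mono ?_ ?_
  · exact (hmeas.mul ((hT i hi).comp
      (by fun_prop : Continuous fun x : ℝ => (x, θ))).measurable).aestronglyMeasurable
  · filter_upwards [ae_restrict_mem hS] with x hxS
    simp only [norm_mul, Real.norm_of_nonneg (hF0 x hxS θ), Real.norm_of_nonneg (hT0 i x hxS θ)]
    exact mul_le_mul_of_nonneg_left
      (Finset.single_le_sum (f := fun i => T i x θ) (fun j _ => hT0 j x hxS θ) hi) (norm_nonneg _)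

open scoped ENNReal in
theorem stmt10 (m : ℕ) (hm : 1 ≤ m) (g K Δ : ℝ) (hg : 0 < g) (hK : 0 < K)
    (hΔ0 : 0 ≤ Δ) (hΔ1 : Δ ≤ 1)
    (a : ℝ) (b : ℝ≥0∞) (ha : 0 ≤ a) (hab : ENNReal.ofReal a ≤ b)
    (h : ℝ → ℝ) (hmeas : Measurable h)
    (hint : IntegrableOn (fun x => h x * fFTR g (m : ℝ) K Δ x)
      {x : ℝ | a ≤ x ∧ ENNReal.ofReal x ≤ b} volume) :
    ∫ x in {x : ℝ | a ≤ x ∧ ENNReal.ofReal x ≤ b}, h x * fFTR g (m : ℝ) K Δ x =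
      (1 / π) * ∫ θ in (0 : ℝ)..π,
        ∑ i ∈ Finset.range m, Cmix m K Δ θ i *
          ∫ x in {x : ℝ | a ≤ x ∧ ENNReal.ofReal x ≤ b},
            h x * fNak ((m - i : ℕ) * Ωmix m g K Δ θ) (m - i) x := by
  obtain ⟨M, rfl⟩ := Nat.exists_eq_add_of_le' hm
  set S : Set ℝ := {x : ℝ | a ≤ x ∧ ENNReal.ofReal x ≤ b} with hSdef
  have hS : MeasurableSet S :=
    measurableSet_Ici.inter (measurableSet_le ENNReal.measurable_ofReal measurable_const)
  have hf : ∀ x, h x * fFTR g ((M + 1 : ℕ) : ℝ) K Δ x = (1 / π) * (h x * ∫ θ in (0 : ℝ)..π,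
      ∑ i ∈ Finset.range (M + 1), mixTerm (M + 1) g K Δ x θ i) := fun x => by
    simp only [fFTR, ftr_integrand_eq hg hK hΔ0 hΔ1]
    ring
  simp only [hf] at hint ⊢
  have hint' : IntegrableOn (fun x => h x * ∫ θ in (0 : ℝ)..π,
      ∑ i ∈ Finset.range (M + 1), mixTerm (M + 1) g K Δ x θ i) S volume := by
    refine (hint.const_mul π).congr (Filter.Eventually.of_forall fun x => ?_)
    simp only []
    field_simp
  rw [integral_const_mul, integral_mixture_swap hS (fun i x θ => mixTerm (M + 1) g K Δ x θ i)
    (fun i hi => continuous_mixTerm hg hK hΔ0 hΔ1 hi)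
    (fun i x hx θ => mixTerm_nonneg hg hK hΔ0 hΔ1 (ha.trans hx.1) θ i) h hmeas hint']
  simp only [mixTerm, mul_left_comm (h _), integral_const_mul]
end

section
/- Let m̂ ≥ 1 and n ≥ 0 be integers, γ̂ > 0, Λ ≥ 0, and s < m̂/γ̂. Then the incomplete generalized moment generating function of the squared Nakagami distribution admits the closed form ∫_Λ^∞ xⁿ exp(sx) f_Nak(x; γ̂, m̂) dx = ( (m̂/γ̂)^{m̂} / (m̂/γ̂ − s)^{m̂+n} ) · ( (m̂+n−1)! / (m̂−1)! ) · exp(−(m̂/γ̂ − s)Λ) · Σ_{j=0}^{m̂+n−1} ( (m̂/γ̂ − s)Λ )^j / j!. -/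
/-!
Up to a constant, the integrand is `x ^ N * exp (-c x)` with `c = m̂/γ̂ - s > 0` and
`N = m̂ + n - 1`. The claim is therefore the closed form of the upper incomplete gamma function at
a positive integer. It follows from the fundamental theorem of calculus on `(Λ, ∞)`: the derivative
of `exp (-c x) * ∑_{j ≤ N} (c x) ^ j / j!` telescopes to `-c * (c x) ^ N / N! * exp (-c x)`
(`hasDerivAt_exp_mul_sum`), and this primitive vanishes at infinity (`tendsto_exp_mul_sum`).
Integrability is automatic since the integrand is nonnegative on `[Λ, ∞)`.
-/

open MeasureTheory Real

lemma hasDerivAt_exp_mul_sum (c x : ℝ) (N : ℕ) :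
    HasDerivAt (fun x : ℝ => Real.exp (-c * x) *
        ∑ j ∈ Finset.range (N + 1), (c * x) ^ j / (Nat.factorial j : ℝ))
      (-(c * (c * x) ^ N / (Nat.factorial N : ℝ) * Real.exp (-c * x))) x := by
  have hlin : HasDerivAt (fun x : ℝ => c * x) c x := by
    simpa using (hasDerivAt_id x).const_mul c
  have hexp : HasDerivAt (fun x : ℝ => Real.exp (-c * x)) (Real.exp (-c * x) * (-c)) x := by
    have h : HasDerivAt (fun x : ℝ => -c * x) (-c) x := by
      simpa using (hasDerivAt_id x).const_mul (-c)
    exact h.exp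
  induction N with
  | zero => simpa [mul_comm] using hexp
  | succ N ih =>
    have hterm := hexp.mul ((hlin.pow (N + 1)).div_const (Nat.factorial (N + 1) : ℝ))
    refine ((ih.add hterm).congr_of_eventuallyEq (Filter.Eventually.of_forall fun y => ?_)
      ).congr_deriv ?_
    · simp only [Finset.sum_range_succ _ (N + 1), mul_add, Pi.add_apply, Pi.mul_apply,
        Pi.pow_apply]
    · have h1 : (Nat.factorial N : ℝ) ≠ 0 := by positivity
      have h2 : (N : ℝ) + 1 ≠ 0 := by positivity
      simp only [Nat.factorial_succ, Pi.pow_apply, Nat.add_sub_cancel]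
      push_cast
      field_simp
      ring

lemma tendsto_exp_mul_sum {c : ℝ} (hc : 0 < c) (N : ℕ) :
    Filter.Tendsto (fun x : ℝ => Real.exp (-c * x) *
        ∑ j ∈ Finset.range N, (c * x) ^ j / (Nat.factorial j : ℝ)) Filter.atTop (nhds 0) := by
  have hlin : Filter.Tendsto (fun x : ℝ => c * x) Filter.atTop Filter.atTop :=
    Filter.tendsto_id.const_mul_atTop hc
  have h := tendsto_finsetSum (Finset.range N) fun j _ =>
    ((tendsto_pow_mul_exp_neg_atTop_nhds_zero j).comp hlin).div_const (Nat.factorial j : ℝ)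
  simp only [zero_div, Finset.sum_const_zero] at h
  refine h.congr fun x => ?_
  rw [Finset.mul_sum]
  refine Finset.sum_congr rfl fun j _ => ?_
  simp only [Function.comp_apply, neg_mul]
  ring

/-- Closed form of the upper incomplete gamma function at the integer `N + 1`, normalised so that
the integrand is the gamma density of shape `N + 1` and rate `c`. -/
lemma integral_Ioi_gamma_density {c Λ : ℝ} (hc : 0 < c) (hΛ : 0 ≤ Λ) (N : ℕ) :
    ∫ x in Set.Ioi Λ, c * (c * x) ^ N / (Nat.factorial N : ℝ) * Real.exp (-c * x) =
      Real.exp (-c * Λ) *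
        ∑ j ∈ Finset.range (N + 1), (c * Λ) ^ j / (Nat.factorial j : ℝ) := by
  have h := integral_Ioi_of_hasDerivAt_of_nonneg' (a := Λ)
    (fun x _ => (hasDerivAt_exp_mul_sum c x N).fun_neg)
    (fun x hx => by
      have hx0 : 0 ≤ x := hΛ.trans (le_of_lt hx)
      rw [neg_neg]
      positivity)
    (tendsto_exp_mul_sum hc (N + 1)).neg
  simpa only [neg_neg, neg_zero, zero_sub, sub_neg_eq_add, zero_add] using h

theorem stmt11 (mh n : ℕ) (hm : 1 ≤ mh) (g Λ s : ℝ) (hg : 0 < g) (hΛ : 0 ≤ Λ)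
    (hs : s < mh / g) :
    ∫ x in Set.Ioi Λ, x ^ n * Real.exp (s * x) * fNak g mh x =
      (((mh : ℝ) / g) ^ mh / ((mh : ℝ) / g - s) ^ (mh + n)) *
        ((Nat.factorial (mh + n - 1) : ℝ) / (Nat.factorial (mh - 1) : ℝ)) *
        Real.exp (-((mh : ℝ) / g - s) * Λ) *
        ∑ j ∈ Finset.range (mh + n), (((mh : ℝ) / g - s) * Λ) ^ j / (Nat.factorial j : ℝ) := by
  obtain ⟨N, hN⟩ : ∃ N, mh + n = N + 1 := ⟨mh + n - 1, by omega⟩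
  have hN' : N = n + (mh - 1) := by omega
  obtain ⟨c, hc_def⟩ : ∃ c, c = (mh : ℝ) / g - s := ⟨_, rfl⟩
  have hc : 0 < c := by rw [hc_def]; linarith
  rw [hN, Nat.add_sub_cancel, ← hc_def, mul_assoc _ (Real.exp _),
    ← integral_Ioi_gamma_density hc hΛ N, ← integral_const_mul]
  congr 1
  funext x
  have hexp : Real.exp (-c * x) = Real.exp (s * x) * Real.exp (-x * mh / g) := by
    rw [← Real.exp_add, hc_def]
    congr 1
    ring
  have h1 : (Nat.factorial N : ℝ) ≠ 0 := by positivity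
  have hpow : x ^ N = x ^ n * x ^ (mh - 1) := by rw [hN', pow_add]
  rw [fNak, hexp, mul_pow, hpow, pow_succ]
  have hcN : c ^ N ≠ 0 := by positivity
  generalize c ^ N = p at hcN
  generalize ((mh : ℝ) / g) ^ mh = q
  field_simp
end

section
/- Let W and Y be independent nonnegative real random variables, where W has a density f_W with respect to Lebesgue measure and Y follows a Gamma distribution with integer shape L ≥ 1 and rate 1/P_I for some P_I > 0 (i.e., Y is the sum of L i.i.d. exponential random variables of mean P_I, so that P(Y > y) = e^{−y/P_I} Σ_{k=0}^{L−1} (y/P_I)^k / k! for y ≥ 0). Let N₀ > 0 and R > 0. Then the outage probability satisfies P( W/(Y+N₀) < R ) = ∫₀^{R N₀} f_W(w) dw + Σ_{k=0}^{L−1} Σ_{l=0}^{k} ( e^{N₀/P_I} (−N₀)^{k−l} / ( l! (k−l)! P_I^k R^l ) ) · ∫_{R N₀}^∞ w^l e^{−w/(R P_I)} f_W(w) dw. -/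
/-!
Since `Y + N₀ > 0`, outage is the event `W / R - N₀ < Y`, so by independence its probability is
`∫ f_W(w) P(Y > w / R - N₀) dw`. For `w ≤ R N₀` the tail probability of the nonnegative variable `Y`
is `1`, which gives the first integral (`f_W` vanishes a.e. on the negative axis because `W ≥ 0`).
For `w > R N₀` it is the Erlang tail `e^{-ry} ∑_{k<L} (ry)^k / k!` at `y = w / R - N₀`, `r = 1 / P_I`
(`gammaMeasure_real_Ioi`), and the binomial theorem turns it into the double sum
(`erlang_tail_expand`). The sums may be exchanged with the integral because every
`w ^ l * e^{-c w}` is bounded on the positive axis (`integrableOn_pow_mul_exp_mul`).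
-/

open MeasureTheory ProbabilityTheory Real

/-- Telescoping: all terms of the derivative of the Erlang tail cancel except the last, which is
minus the Gamma density. -/
lemma hasDerivAt_erlang_tail (r : ℝ) (n : ℕ) (x : ℝ) :
    HasDerivAt (fun x : ℝ => rexp (-(r * x)) * ∑ k ∈ Finset.range (n + 1),
        (r * x) ^ k / (Nat.factorial k : ℝ))
      (-(r ^ (n + 1) / (Nat.factorial n : ℝ) * x ^ n * rexp (-(r * x)))) x := by
  have hlin : HasDerivAt (fun x : ℝ => r * x) r x := by
    simpa using (hasDerivAt_id x).const_mul r
  have hexp : HasDerivAt (fun x : ℝ => rexp (-(r * x))) (rexp (-(r * x)) * (-r)) x :=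
    hlin.neg.exp
  induction n with
  | zero =>
    simpa [mul_comm] using hexp
  | succ n ih =>
    have hterm : HasDerivAt
        (fun x : ℝ => rexp (-(r * x)) * ((r * x) ^ (n + 1) / (Nat.factorial (n + 1) : ℝ)))
        (rexp (-(r * x)) * (-r) * ((r * x) ^ (n + 1) / (Nat.factorial (n + 1) : ℝ)) +
          rexp (-(r * x)) * ((((n + 1 : ℕ) : ℝ) * (r * x) ^ n * r) /
            (Nat.factorial (n + 1) : ℝ))) x :=
      hexp.mul ((hlin.pow (n + 1)).div_const _)
    have hsum := ih.add hterm
    have hfun : (fun x : ℝ => rexp (-(r * x)) * ∑ k ∈ Finset.range (n + 1 + 1),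
        (r * x) ^ k / (Nat.factorial k : ℝ)) =
        (fun x : ℝ => rexp (-(r * x)) * ∑ k ∈ Finset.range (n + 1),
          (r * x) ^ k / (Nat.factorial k : ℝ)) +
        (fun x : ℝ => rexp (-(r * x)) * ((r * x) ^ (n + 1) / (Nat.factorial (n + 1) : ℝ))) := by
      ext x
      simp only [Pi.add_apply]
      rw [Finset.sum_range_succ, mul_add]
    rw [hfun]
    refine hsum.congr_deriv ?_
    have h1 : (Nat.factorial n : ℝ) ≠ 0 := by positivity
    have h2 : (n : ℝ) + 1 ≠ 0 := by positivity
    rw [Nat.factorial_succ]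
    push_cast
    field_simp
    ring

/-- The Erlang tail formula: the survival function of the Gamma law of integer shape. -/
lemma gammaMeasure_real_Ioi {L : ℕ} (hL : 1 ≤ L) {r : ℝ} (hr : 0 < r) {y : ℝ} (hy : 0 ≤ y) :
    (gammaMeasure L r).real (Set.Ioi y) =
      rexp (-(r * y)) * ∑ k ∈ Finset.range L, (r * y) ^ k / (Nat.factorial k : ℝ) := by
  obtain ⟨n, rfl⟩ : ∃ n, L = n + 1 := ⟨L - 1, by omega⟩
  have hderiv : ∀ x ∈ Set.Ici y, HasDerivAt
      (fun x : ℝ => -(rexp (-(r * x)) * ∑ k ∈ Finset.range (n + 1),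
        (r * x) ^ k / (Nat.factorial k : ℝ)))
      (r ^ (n + 1) / (Nat.factorial n : ℝ) * x ^ n * rexp (-(r * x))) x := by
    intro x _
    exact (hasDerivAt_erlang_tail r n x).neg.congr_deriv (neg_neg _)
  have hpos : ∀ x ∈ Set.Ioi y,
      0 ≤ r ^ (n + 1) / (Nat.factorial n : ℝ) * x ^ n * rexp (-(r * x)) := by
    intro x hx
    have : 0 < x := lt_of_le_of_lt hy hx
    positivity
  have hlim : Filter.Tendsto
      (fun x : ℝ => -(rexp (-(r * x)) * ∑ k ∈ Finset.range (n + 1),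
        (r * x) ^ k / (Nat.factorial k : ℝ))) Filter.atTop (nhds 0) := by
    have h0 : Filter.Tendsto (fun z : ℝ => ∑ k ∈ Finset.range (n + 1),
        z ^ k * rexp (-z) / (Nat.factorial k : ℝ)) Filter.atTop (nhds 0) := by
      have := tendsto_finsetSum (Finset.range (n + 1)) (fun k _ =>
        (Real.tendsto_pow_mul_exp_neg_atTop_nhds_zero k).div_const (Nat.factorial k : ℝ))
      simpa using this
    have h1 := (h0.comp (Filter.Tendsto.const_mul_atTop hr Filter.tendsto_id)).neg
    rw [neg_zero] at h1
    refine h1.congr fun x => ?_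
    simp only [Function.comp, id, Finset.mul_sum]
    congr 1
    exact Finset.sum_congr rfl fun k _ => by ring
  have hint := integral_Ioi_of_hasDerivAt_of_nonneg' hderiv hpos hlim
  have hintg := integrableOn_Ioi_deriv_of_nonneg' hderiv hpos hlim
  rw [Measure.real, gammaMeasure, withDensity_apply _ measurableSet_Ioi]
  have hcongr : ∫⁻ x in Set.Ioi y, gammaPDF ((n + 1 : ℕ) : ℝ) r x =
      ∫⁻ x in Set.Ioi y, ENNReal.ofReal
        (r ^ (n + 1) / (Nat.factorial n : ℝ) * x ^ n * rexp (-(r * x))) := by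
    refine setLIntegral_congr_fun measurableSet_Ioi fun x hx => ?_
    have hx0 : 0 < x := lt_of_le_of_lt hy hx
    rw [gammaPDF_of_nonneg hx0.le]
    have e1 : Gamma ((n + 1 : ℕ) : ℝ) = (Nat.factorial n : ℝ) := by
      rw [Nat.cast_succ, Real.Gamma_nat_eq_factorial]
    have e2 : x ^ (((n + 1 : ℕ) : ℝ) - 1) = x ^ n := by
      rw [Nat.cast_succ, add_sub_cancel_right, Real.rpow_natCast]
    rw [e1, e2, Real.rpow_natCast]
  rw [hcongr, ← ofReal_integral_eq_lintegral_ofReal hintg, ENNReal.toReal_ofReal, hint]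
  · ring
  · exact setIntegral_nonneg measurableSet_Ioi hpos
  · exact (ae_restrict_iff' measurableSet_Ioi).2 (Filter.Eventually.of_forall hpos)

/-- The Gamma law puts full mass to the right of any nonpositive point. -/
lemma gammaMeasure_real_Ioi_of_nonpos {L : ℕ} (hL : 1 ≤ L) {r : ℝ} (hr : 0 < r) {y : ℝ}
    (hy : y ≤ 0) : (gammaMeasure L r).real (Set.Ioi y) = 1 := by
  have hLpos : (0 : ℝ) < L := by exact_mod_cast hL
  have := isProbabilityMeasure_gammaMeasure hLpos hr
  refine le_antisymm measureReal_le_one ?_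
  have h0 : (gammaMeasure L r).real (Set.Ioi 0) = 1 := by
    rw [gammaMeasure_real_Ioi hL hr le_rfl]
    obtain ⟨n, rfl⟩ : ∃ n, L = n + 1 := ⟨L - 1, by omega⟩
    rw [Finset.sum_range_succ']
    simp
  rw [← h0]
  exact measureReal_mono (Set.Ioi_subset_Ioi hy)

lemma integrableOn_pow_mul_exp_mul {f : ℝ → ℝ} (hf : Integrable f) {a c : ℝ} (ha : 0 ≤ a)
    (hc : 0 < c) (l : ℕ) :
    IntegrableOn (fun w => w ^ l * rexp (-w / c) * f w) (Set.Ioi a) := by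
  refine Integrable.bdd_mul (c := c ^ l * (Nat.factorial l : ℝ)) hf.integrableOn
    (by fun_prop) ?_
  refine (ae_restrict_iff' measurableSet_Ioi).2 (Filter.Eventually.of_forall fun w hw => ?_)
  have hw0 : 0 < w := lt_of_le_of_lt ha hw
  rw [Real.norm_of_nonneg (by positivity)]
  have h := Real.pow_div_factorial_le_exp _ (div_pos hw0 hc).le l
  rw [neg_div, Real.exp_neg, ← div_eq_mul_inv, div_le_iff₀ (Real.exp_pos _)]
  rw [div_pow, div_div, div_le_iff₀ (by positivity)] at h
  linarith

/-- Binomial expansion of the Erlang tail at `w / R - N₀`. -/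
lemma erlang_tail_expand (L : ℕ) {P_I R : ℝ} (hPI : 0 < P_I) (hR : 0 < R) (N₀ w : ℝ) :
    rexp (-(1 / P_I * (w / R - N₀))) * ∑ k ∈ Finset.range L,
        (1 / P_I * (w / R - N₀)) ^ k / (Nat.factorial k : ℝ) =
      ∑ k ∈ Finset.range L, ∑ l ∈ Finset.range (k + 1),
        (Real.exp (N₀ / P_I) * (-N₀) ^ (k - l) /
          ((Nat.factorial l : ℝ) * (Nat.factorial (k - l) : ℝ) * P_I ^ k * R ^ l)) *
          (w ^ l * Real.exp (-w / (R * P_I))) := by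
  have hexp : rexp (-(1 / P_I * (w / R - N₀))) = rexp (N₀ / P_I) * rexp (-w / (R * P_I)) := by
    rw [← Real.exp_add]
    congr 1
    field_simp
    ring
  rw [hexp, Finset.mul_sum]
  refine Finset.sum_congr rfl fun k _ => ?_
  rw [mul_pow, sub_eq_add_neg, add_pow, Finset.mul_sum, Finset.sum_div, Finset.mul_sum]
  refine Finset.sum_congr rfl fun l hl => ?_
  have hlk : l ≤ k := Nat.lt_succ_iff.1 (Finset.mem_range.1 hl)
  rw [Nat.cast_choose ℝ hlk]
  have h1 : (Nat.factorial k : ℝ) ≠ 0 := by positivity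
  have h2 : (Nat.factorial l : ℝ) ≠ 0 := by positivity
  have h3 : (Nat.factorial (k - l) : ℝ) ≠ 0 := by positivity
  rw [div_pow, div_pow, one_pow]
  field_simp

theorem stmt13 {Ω : Type*} [MeasurableSpace Ω] (P : Measure Ω) [IsProbabilityMeasure P]
    (W Y : Ω → ℝ) (hWmeas : Measurable W) (hYmeas : Measurable Y)
    (hWnn : ∀ ω, 0 ≤ W ω) (hYnn : ∀ ω, 0 ≤ Y ω)
    (hindep : IndepFun W Y P)
    (fW : ℝ → ℝ) (hfW_meas : Measurable fW) (hfW_nn : ∀ x, 0 ≤ fW x)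
    (hW_law : Measure.map W P = volume.withDensity (fun w => ENNReal.ofReal (fW w)))
    (L : ℕ) (hL : 1 ≤ L) (P_I : ℝ) (hPI : 0 < P_I)
    (hY_law : Measure.map Y P = gammaMeasure L (1 / P_I))
    (N₀ R : ℝ) (hN₀ : 0 < N₀) (hR : 0 < R) :
    (P {ω | W ω / (Y ω + N₀) < R}).toReal =
      (∫ w in (0 : ℝ)..(R * N₀), fW w) +
        ∑ k ∈ Finset.range L, ∑ l ∈ Finset.range (k + 1),
          (Real.exp (N₀ / P_I) * (-N₀) ^ (k - l) /
            ((Nat.factorial l : ℝ) * (Nat.factorial (k - l) : ℝ) * P_I ^ k * R ^ l)) *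
          ∫ w in Set.Ioi (R * N₀), w ^ l * Real.exp (-w / (R * P_I)) * fW w := by
  have hr : 0 < 1 / P_I := by positivity
  have hLpos : (0 : ℝ) < L := by exact_mod_cast hL
  have := isProbabilityMeasure_gammaMeasure hLpos hr
  have hprobW : IsProbabilityMeasure (Measure.map W P) :=
    Measure.isProbabilityMeasure_map hWmeas.aemeasurable
  have hdens : Measurable fun w => ENNReal.ofReal (fW w) := hfW_meas.ennreal_ofReal
  have hfW_int : Integrable fW := by
    refine ⟨hfW_meas.aestronglyMeasurable, ?_⟩
    rw [hasFiniteIntegral_iff_ofReal (Filter.Eventually.of_forall hfW_nn)]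
    have h1 : Measure.map W P Set.univ = 1 := measure_univ
    rw [hW_law, withDensity_apply _ MeasurableSet.univ, Measure.restrict_univ] at h1
    rw [h1]
    exact ENNReal.one_lt_top
  -- `W ≥ 0` forces the density to vanish almost everywhere on the negative axis.
  have hneg : ∀ᵐ w ∂(volume : Measure ℝ), w < 0 → fW w = 0 := by
    have h1 : ∀ᵐ w ∂(Measure.map W P), 0 ≤ w :=
      (ae_map_iff hWmeas.aemeasurable measurableSet_Ici).2 (Filter.Eventually.of_forall hWnn)
    rw [hW_law, ae_withDensity_iff hdens] at h1
    filter_upwards [h1] with w hw hw0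
    by_contra hne
    have hpos : 0 < fW w := lt_of_le_of_ne (hfW_nn w) (Ne.symm hne)
    exact absurd (hw (by simpa using hpos)) (not_le.2 hw0)
  set g : ℝ → ℝ := fun w => (gammaMeasure L (1 / P_I)).real (Set.Ioi (w / R - N₀)) with hg
  have hevent : {ω | W ω / (Y ω + N₀) < R} =
      (fun ω => (W ω, Y ω)) ⁻¹' {p : ℝ × ℝ | p.1 / R - N₀ < p.2} := by
    ext ω
    have hpos : 0 < Y ω + N₀ := by linarith [hYnn ω]
    simp only [Set.mem_ofPred_eq, Set.mem_preimage]
    rw [div_lt_iff₀ hpos, sub_lt_iff_lt_add, div_lt_iff₀ hR, mul_comm R]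
  have hSmeas : MeasurableSet {p : ℝ × ℝ | p.1 / R - N₀ < p.2} :=
    measurableSet_lt (by fun_prop) (by fun_prop)
  have hprob : (P {ω | W ω / (Y ω + N₀) < R}).toReal = ∫ w, fW w * g w := by
    rw [hevent, ← Measure.map_apply (hWmeas.prodMk hYmeas) hSmeas,
      (indepFun_iff_map_prod_eq_prod_map_map hWmeas.aemeasurable hYmeas.aemeasurable).1 hindep,
      hY_law, Measure.prod_apply hSmeas]
    have hsec : ∀ w : ℝ, Prod.mk w ⁻¹' {p : ℝ × ℝ | p.1 / R - N₀ < p.2} =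
        Set.Ioi (w / R - N₀) := fun w => rfl
    have hm := measurable_measure_prodMk_left (ν := gammaMeasure L (1 / P_I)) hSmeas
    rw [← integral_toReal hm.aemeasurable
      (Filter.Eventually.of_forall fun w => measure_lt_top _ _), hW_law,
      integral_withDensity_eq_integral_toReal_smul hdens
        (Filter.Eventually.of_forall fun w => ENNReal.ofReal_lt_top)]
    refine integral_congr_ae (Filter.Eventually.of_forall fun w => ?_)
    simp only [hsec, ENNReal.toReal_ofReal (hfW_nn w), smul_eq_mul, hg, Measure.real]
  have hgmeas : Measurable g :=
    (measurable_measure_prodMk_left (ν := gammaMeasure L (1 / P_I)) hSmeas).ennreal_toReal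
  have hfg : Integrable fun w => fW w * g w := by
    refine hfW_int.mul_bdd (c := 1) hgmeas.aestronglyMeasurable
      (Filter.Eventually.of_forall fun w => ?_)
    rw [Real.norm_of_nonneg measureReal_nonneg]
    exact measureReal_le_one
  have hRN : 0 ≤ R * N₀ := by positivity
  rw [hprob, ← intervalIntegral.integral_Iic_add_Ioi (b := R * N₀) hfg.integrableOn
    hfg.integrableOn]
  congr 1
  · have h1 : ∫ w in Set.Iic (R * N₀), fW w * g w = ∫ w in Set.Iic (R * N₀), fW w := by
      refine setIntegral_congr_fun measurableSet_Iic fun w hw => ?_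
      have hw' : w / R - N₀ ≤ 0 := by
        rw [sub_nonpos, div_le_iff₀ hR, mul_comm]
        exact hw
      simp only [hg, gammaMeasure_real_Ioi_of_nonpos hL hr hw', mul_one]
    have h2 : ∫ w in Set.Iic (0 : ℝ), fW w = 0 := by
      rw [integral_Iic_eq_integral_Iio]
      exact setIntegral_eq_zero_of_ae_eq_zero (by filter_upwards [hneg] with w hw using hw)
    rw [h1, ← intervalIntegral.integral_Iic_sub_Iic hfW_int.integrableOn hfW_int.integrableOn,
      h2, sub_zero]
  · have h1 : ∫ w in Set.Ioi (R * N₀), fW w * g w =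
        ∫ w in Set.Ioi (R * N₀), ∑ k ∈ Finset.range L, ∑ l ∈ Finset.range (k + 1),
          (Real.exp (N₀ / P_I) * (-N₀) ^ (k - l) /
            ((Nat.factorial l : ℝ) * (Nat.factorial (k - l) : ℝ) * P_I ^ k * R ^ l)) *
          (w ^ l * Real.exp (-w / (R * P_I)) * fW w) := by
      refine setIntegral_congr_fun measurableSet_Ioi fun w hw => ?_
      have hw' : 0 ≤ w / R - N₀ := by
        rw [sub_nonneg, le_div_iff₀ hR, mul_comm]
        exact le_of_lt hw
      simp only [hg, gammaMeasure_real_Ioi hL hr hw']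
      rw [erlang_tail_expand L hPI hR, mul_comm, Finset.sum_mul]
      refine Finset.sum_congr rfl fun k _ => ?_
      rw [Finset.sum_mul]
      exact Finset.sum_congr rfl fun l _ => by ring
    have hI : ∀ l : ℕ, IntegrableOn (fun w => w ^ l * rexp (-w / (R * P_I)) * fW w)
        (Set.Ioi (R * N₀)) :=
      fun l => integrableOn_pow_mul_exp_mul hfW_int hRN (mul_pos hR hPI) l
    rw [h1, integral_finsetSum _ fun k _ => integrable_finsetSum _ fun l _ => (hI l).const_mul _]
    refine Finset.sum_congr rfl fun k _ => ?_
    rw [integral_finsetSum _ fun l _ => (hI l).const_mul _]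
    exact Finset.sum_congr rfl fun l _ => integral_const_mul _ _
end
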